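/- Let f, τ : ℝ → ℂ be 2π-periodic and C^∞, with τ′(α) ≠ 0 for all α and τ(α) ≠ τ(β) whenever α − β is not an integer multiple of 2π, and let ρ be a filter function. For a discrete function q define L_h(q)_i = (h/π) Σ_{j, (j−i) odd} f(α_j)(τ(α_j) − τ(α_i)) q_j / (conj(τ(α_j)) − conj(τ(α_i)))² and K_{3h}(q)_i = (h/π) Σ_{j, (j−i) odd} q_j [ f(α_j)(τ(α_j) − τ(α_i))/(conj(τ(α_j)) − conj(τ(α_i)))² + (f(α_i) τ′(α_i)/(2 conj(τ′(α_i))²)) cot((α_i − α_j)/2) ], both sums over j ∈ {−N/2+1, …, N/2} with j − i odd. Then for every even N ≥ 2 and every discrete q, L_h(q)_i = −(f(α_i) τ′(α_i)/(2 conj(τ′(α_i))²))(H_h q)_i + K_{3h}(q)_i for all i, and there exists a constant c > 0, depending only on f, τ and ρ and not on N or φ, such that ‖D_h^k(K_{3h}(φ^p))‖_{l²} ≤ c ‖φ‖_{l²} for every discrete φ and every k ∈ {0, 1, 2}. -/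

import Mathlib

open scoped BigOperators
open Finset

noncomputable section

/-- Grid spacing `h = 2π/N`. -/
def hgrid (N : ℤ) : ℝ := 2 * Real.pi / N

/-- Grid points `α_j = j h`. -/
def gridPt (N : ℤ) (j : ℤ) : ℝ := j * hgrid N

/-- Index set `{-N/2+1, …, N/2}`. -/
def idxs (N : ℤ) : Finset ℤ := Finset.Icc (-(N / 2) + 1) (N / 2)

/-- Discrete Fourier coefficient `f̂_k`. -/
def dft (N : ℤ) (f : ℤ → ℂ) (k : ℤ) : ℂ :=
  (N : ℂ)⁻¹ * ∑ j ∈ idxs N, f j * Complex.exp (-(Complex.I * (k : ℂ) * (gridPt N j : ℂ)))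

/-- Reconstruction of a discrete function from Fourier coefficients. -/
def idft (N : ℤ) (c : ℤ → ℂ) (j : ℤ) : ℂ :=
  ∑ k ∈ idxs N, c k * Complex.exp (Complex.I * (k : ℂ) * (gridPt N j : ℂ))

/-- The pseudo-spectral derivative `S_h`. -/
def Sh (N : ℤ) (f : ℤ → ℂ) : ℤ → ℂ :=
  idft N fun k => if k = N / 2 then 0 else Complex.I * (k : ℂ) * dft N f k

/-- The pseudo-spectral antiderivative `S_h⁻¹`. -/
def Shinv (N : ℤ) (f : ℤ → ℂ) : ℤ → ℂ :=
  idft N fun k => if k = 0 then 0 else dft N f k / (Complex.I * (k : ℂ))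

/-- The filtered discrete function `f^p`. -/
def filterP (N : ℤ) (ρ : ℝ → ℝ) (f : ℤ → ℂ) : ℤ → ℂ :=
  idft N fun k => (ρ (gridPt N k) : ℂ) * dft N f k

/-- The filtered derivative `D_h`. -/
def Dh (N : ℤ) (ρ : ℝ → ℝ) (f : ℤ → ℂ) : ℤ → ℂ :=
  idft N fun k => Complex.I * (k : ℂ) * (ρ (gridPt N k) : ℂ) * dft N f k

/-- Discrete `l²` norm. -/
def l2norm (N : ℤ) (f : ℤ → ℂ) : ℝ :=
  Real.sqrt (hgrid N * ∑ j ∈ idxs N, ‖f j‖ ^ 2)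

/-- Discrete Hilbert transform `H_h`. -/
def Hh (N : ℤ) (f : ℤ → ℂ) (i : ℤ) : ℂ :=
  ((hgrid N / Real.pi : ℝ) : ℂ) *
    ∑ j ∈ (idxs N).filter (fun j => Odd (j - i)),
      f j * (Real.cot ((gridPt N i - gridPt N j) / 2) : ℂ)

/-- Discrete inner product `(f,g)_h`. -/
def dip (N : ℤ) (f g : ℤ → ℂ) : ℂ :=
  (hgrid N : ℂ) * ∑ j ∈ idxs N, (starRingEnd ℂ) (f j) * g j

/-- Discrete mean `⟨f⟩_h`. -/
def dmean (N : ℤ) (f : ℤ → ℂ) : ℂ :=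
  (N : ℂ)⁻¹ * ∑ j ∈ idxs N, f j

/-- The discrete function of samples of a periodic function. -/
def samples (N : ℤ) (f : ℝ → ℂ) : ℤ → ℂ := fun j => f (gridPt N j)

/-- Fourier coefficient of a `2π`-periodic function. -/
def fourierCoeffP (f : ℝ → ℂ) (k : ℤ) : ℂ :=
  ((2 * Real.pi)⁻¹ : ℝ) * ∫ α in (-Real.pi)..Real.pi, f α * Complex.exp (-(Complex.I * (k : ℂ) * (α : ℂ)))

/-- Sobolev norm `‖f‖_s`. -/
def sobolevNorm (s : ℕ) (f : ℝ → ℂ) : ℝ :=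
  Real.sqrt (∑' k : ℤ, (1 + (k : ℝ) ^ 2) ^ s * ‖fourierCoeffP f k‖ ^ 2)

/-- A filter (cutoff) function for numerical filtering. -/
structure IsFilter (ρ : ℝ → ℝ) : Prop where
  even : ∀ x, ρ (-x) = ρ x
  nonneg : ∀ x, 0 ≤ ρ x
  smooth : ∃ r : ℕ, 2 < r ∧ ContDiff ℝ r ρ
  zero_at_pi : ρ Real.pi = 0
  zero_at_neg_pi : ρ (-Real.pi) = 0
  deriv_zero_at_pi : deriv ρ Real.pi = 0
  deriv_zero_at_neg_pi : deriv ρ (-Real.pi) = 0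
  one_near_zero : ∃ μ : ℝ, 0 < μ ∧ μ < 1 ∧ ∀ x : ℝ, |x| ≤ μ * Real.pi → ρ x = 1

/-- The singular sum `L_h`. -/
def Lh (N : ℤ) (f τ : ℝ → ℂ) (q : ℤ → ℂ) (i : ℤ) : ℂ :=
  ((hgrid N / Real.pi : ℝ) : ℂ) * ∑ j ∈ (idxs N).filter (fun j => Odd (j - i)),
    f (gridPt N j) * (τ (gridPt N j) - τ (gridPt N i)) * q j /
      ((starRingEnd ℂ) (τ (gridPt N j)) - (starRingEnd ℂ) (τ (gridPt N i))) ^ 2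

/-- The remainder operator `K_{3h}[f,τ]`. -/
def K3h (N : ℤ) (f τ : ℝ → ℂ) (q : ℤ → ℂ) (i : ℤ) : ℂ :=
  ((hgrid N / Real.pi : ℝ) : ℂ) * ∑ j ∈ (idxs N).filter (fun j => Odd (j - i)),
    q j * (f (gridPt N j) * (τ (gridPt N j) - τ (gridPt N i)) /
        ((starRingEnd ℂ) (τ (gridPt N j)) - (starRingEnd ℂ) (τ (gridPt N i))) ^ 2 +
      f (gridPt N i) * deriv τ (gridPt N i) /
          (2 * (starRingEnd ℂ) (deriv τ (gridPt N i)) ^ 2) *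
        (Real.cot ((gridPt N i - gridPt N j) / 2) : ℂ))

open scoped ContDiff in
/-- Differentiation under the integral sign for a smooth integrand. -/
theorem hasFDerivAt_intervalIntegral_of_contDiff {P : Type*} [NormedAddCommGroup P]
    [NormedSpace ℝ P] [FiniteDimensional ℝ P] {F : P × ℝ → ℂ} (hF : ContDiff ℝ ∞ F) (p : P) :
    HasFDerivAt (fun p => ∫ s in (0 : ℝ)..1, F (p, s))
      (∫ s in (0 : ℝ)..1, (fderiv ℝ F (p, s)).comp (ContinuousLinearMap.inl ℝ P ℝ)) p := by
  have hF' : Continuous fun q : P × ℝ =>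
      (fderiv ℝ F q).comp (ContinuousLinearMap.inl ℝ P ℝ) :=
    (hF.continuous_fderiv (by simp)).clm_comp continuous_const
  obtain ⟨C, hC⟩ := ((isCompact_closedBall p 1).prod (isCompact_Icc (a := (0 : ℝ))
    (b := 1))).exists_bound_of_continuousOn hF'.continuousOn
  refine intervalIntegral.hasFDerivAt_integral_of_dominated_of_fderiv_le
    (F' := fun p s => (fderiv ℝ F (p, s)).comp (ContinuousLinearMap.inl ℝ P ℝ))
    (bound := fun _ => C) (Metric.ball_mem_nhds p one_pos) ?_ ?_ ?_ ?_ ?_ ?_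
  · exact Filter.Eventually.of_forall fun x =>
      (hF.continuous.comp (by fun_prop : Continuous fun s : ℝ => (x, s))).aestronglyMeasurable
  · exact (hF.continuous.comp (by fun_prop : Continuous fun s : ℝ => (p, s))).intervalIntegrable _ _
  · exact (hF'.comp (by fun_prop : Continuous fun s : ℝ => (p, s))).aestronglyMeasurable
  · refine Filter.Eventually.of_forall fun s hs x hx => hC (x, s) ⟨Metric.ball_subset_closedBall hx, ?_⟩
    rw [Set.uIoc_of_le zero_le_one] at hs
    exact ⟨hs.1.le, hs.2⟩
  · simp
  · refine Filter.Eventually.of_forall fun s _ x _ => ?_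
    have h1 := (hF.differentiable (by simp) (x, s)).hasFDerivAt
    exact h1.comp x (hasFDerivAt_prodMk_left x s)

open scoped ContDiff in
/-- The integral over `[0, 1]` of a smooth integrand is smooth in the parameter. -/
theorem contDiff_intervalIntegral_param {P : Type*} [NormedAddCommGroup P]
    [NormedSpace ℝ P] [FiniteDimensional ℝ P] {F : P × ℝ → ℂ} (hF : ContDiff ℝ ∞ F) :
    ContDiff ℝ ∞ fun p => ∫ s in (0 : ℝ)..1, F (p, s) := by
  refine contDiff_infty.2 fun n => ?_
  induction n generalizing F with
  | zero =>
    exact contDiff_zero.2 (continuous_iff_continuousAt.2 fun p =>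
      (hasFDerivAt_intervalIntegral_of_contDiff hF p).continuousAt)
  | succ n ih =>
    push_cast
    refine contDiff_succ_iff_fderiv_apply.2 ⟨fun p =>
      (hasFDerivAt_intervalIntegral_of_contDiff hF p).differentiableAt, by simp, fun y => ?_⟩
    have hF' : ContDiff ℝ ∞ fun q : P × ℝ => fderiv ℝ F q (y, 0) :=
      (hF.fderiv_right (by simp)).clm_apply contDiff_const
    convert ih hF' using 2 with p
    rw [(hasFDerivAt_intervalIntegral_of_contDiff hF p).fderiv,
      ContinuousLinearMap.intervalIntegral_apply]
    · simp
    · exact Continuous.intervalIntegrable (((hF.continuous_fderiv (by simp)).comp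
        (by fun_prop : Continuous fun s : ℝ => (p, s))).clm_comp continuous_const) _ _

/-- The secant slope `(g (β + t) - g β) / t`, extended smoothly to `t = 0`, at `p = (t, β)`. -/
def secantSlope (g : ℝ → ℂ) (p : ℝ × ℝ) : ℂ :=
  ∫ s in (0 : ℝ)..1, deriv g (p.2 + s * p.1)

theorem secantSlope_zero (g : ℝ → ℂ) (β : ℝ) : secantSlope g (0, β) = deriv g β := by
  simp [secantSlope]

open scoped ContDiff in
theorem contDiff_secantSlope {g : ℝ → ℂ} (hg : ContDiff ℝ ∞ g) :
    ContDiff ℝ ∞ (secantSlope g) := by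
  have hd : ContDiff ℝ ∞ (deriv g) := (contDiff_infty_iff_deriv.1 hg).2
  exact contDiff_intervalIntegral_param (F := fun q : (ℝ × ℝ) × ℝ => deriv g (q.1.2 + q.2 * q.1.1))
    (hd.comp (by fun_prop))

/-- Hadamard's formula along a segment starting at the origin. -/
theorem mul_integral_deriv_eq_sub {b b' : ℝ → ℂ} {t : ℝ}
    (hb : ∀ s ∈ Set.Icc (0 : ℝ) 1, HasDerivAt b (b' (s * t)) (s * t))
    (hc : ContinuousOn (fun s : ℝ => b' (s * t)) (Set.Icc 0 1)) :
    (t : ℂ) * ∫ s in (0 : ℝ)..1, b' (s * t) = b t - b 0 := by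
  have h := intervalIntegral.integral_eq_sub_of_hasDerivAt (a := 0) (b := 1)
    (f := fun s : ℝ => b (s * t)) (f' := fun s => (t : ℂ) * b' (s * t)) (fun s hs => by
      rw [Set.uIcc_of_le zero_le_one] at hs
      have := (hb s hs).scomp s ((hasDerivAt_id s).mul_const t)
      simpa [Function.comp_def] using this)
    (ContinuousOn.intervalIntegrable (by
      rw [Set.uIcc_of_le zero_le_one]; exact continuousOn_const.mul hc))
  simpa [intervalIntegral.integral_const_mul] using h

open scoped ContDiff in
theorem mul_secantSlope {g : ℝ → ℂ} (hg : ContDiff ℝ ∞ g) (t β : ℝ) :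
    (t : ℂ) * secantSlope g (t, β) = g (β + t) - g β := by
  have h := mul_integral_deriv_eq_sub (b := fun x => g (β + x)) (b' := fun x => deriv g (β + x))
    (t := t) (fun s _ => HasDerivAt.comp_const_add β _
      (hg.differentiable (by simp) _).hasDerivAt)
    ((((contDiff_infty_iff_deriv.1 hg).2.continuous).comp (by fun_prop)).continuousOn)
  simpa [secantSlope] using h

/-- A second difference is controlled by the second derivative. -/
theorem norm_second_difference_le {a a' a'' : ℝ → ℂ} {r M x v : ℝ}
    (ha : ∀ y ∈ Set.Icc (-r) r, HasDerivAt a (a' y) y)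
    (ha' : ∀ y ∈ Set.Icc (-r) r, HasDerivAt a' (a'' y) y)
    (hM : ∀ y ∈ Set.Icc (-r) r, ‖a'' y‖ ≤ M)
    (h1 : x + v ∈ Set.Icc (-r) r) (h2 : x - v ∈ Set.Icc (-r) r) :
    ‖a (x + v) - 2 * a x + a (x - v)‖ ≤ 2 * M * v ^ 2 := by
  have key : ∀ w, |w| ≤ |v| → x + w ∈ Set.Icc (-r) r ∧ x - w ∈ Set.Icc (-r) r := by
    intro w hw
    obtain ⟨h3, h4⟩ := abs_le.1 hw
    obtain ⟨h5, h6⟩ := h1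
    obtain ⟨h7, h8⟩ := h2
    rcases abs_cases v with ⟨h9, _⟩ | ⟨h9, _⟩ <;> refine ⟨⟨?_, ?_⟩, ⟨?_, ?_⟩⟩ <;> linarith
  have hx : x ∈ Set.Icc (-r) r := by simpa using (key 0 (by simp)).1
  have hM0 : 0 ≤ M := (norm_nonneg _).trans (hM x hx)
  have hd : ∀ w ∈ Metric.closedBall (0 : ℝ) |v|,
      HasDerivWithinAt (fun w => a (x + w) - 2 * a x + a (x - w)) (a' (x + w) - a' (x - w))
        (Metric.closedBall (0 : ℝ) |v|) w := by
    intro w hw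
    have hw' := key w (by simpa using hw)
    have e1 := HasDerivAt.comp_const_add x w (ha _ hw'.1)
    have e2 := HasDerivAt.comp_const_sub x w (ha _ hw'.2)
    have := (e1.sub_const (2 * a x)).add e2
    rw [← sub_eq_add_neg] at this
    exact this.hasDerivWithinAt
  have hb : ∀ w ∈ Metric.closedBall (0 : ℝ) |v|, ‖a' (x + w) - a' (x - w)‖ ≤ 2 * M * |v| := by
    intro w hw
    have hw1 : |w| ≤ |v| := by simpa using hw
    have hw' := key w hw1
    have := (convex_Icc (-r) r).norm_image_sub_le_of_norm_hasDerivWithin_le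
      (fun y hy => (ha' y hy).hasDerivWithinAt) hM hw'.2 hw'.1
    refine this.trans ?_
    rw [show x + w - (x - w) = 2 * w by ring, norm_mul, Real.norm_eq_abs, Real.norm_eq_abs,
      abs_two]
    nlinarith
  have := (convex_closedBall (0 : ℝ) |v|).norm_image_sub_le_of_norm_hasDerivWithin_le hd hb
    (x := 0) (y := v) (by simp) (by simp)
  have e : a (x + 0) - 2 * a x + a (x - 0) = 0 := by simp; ring
  rw [e, sub_zero, sub_zero, Real.norm_eq_abs] at this
  rwa [mul_assoc, abs_mul_abs_self, ← sq] at this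

open scoped ContDiff in
/-- The quotient of a smooth function by its first variable, on whose zero set it vanishes,
is bounded together with its second difference quotients, uniformly in the parameter. -/
theorem exists_bound_quotient {B : ℝ × ℝ → ℂ} {R r : ℝ} (hrR : r < R) {K : Set ℝ}
    (hK : IsCompact K) (hB : ContDiffOn ℝ ∞ B {p | |p.1| < R}) (h0 : ∀ β, B (0, β) = 0) :
    ∃ M : ℝ, 0 ≤ M ∧ ∀ β ∈ K, ∃ g : ℝ → ℂ,
      (∀ t ∈ Set.Icc (-r) r, (t : ℂ) * g t = B (t, β)) ∧
      (∀ t ∈ Set.Icc (-r) r, ‖g t‖ ≤ M) ∧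
      ∀ t u, t + u ∈ Set.Icc (-r) r → t - u ∈ Set.Icc (-r) r →
        ‖g (t + u) - 2 * g t + g (t - u)‖ ≤ M * u ^ 2 := by
  set U : Set (ℝ × ℝ) := {p | |p.1| < R} with hUdef
  have hU : IsOpen U := isOpen_lt (by fun_prop) continuous_const
  have diffstep : ∀ {A : ℝ × ℝ → ℂ}, ContDiffOn ℝ ∞ A U →
      ContDiffOn ℝ ∞ (fun p => fderiv ℝ A p (1, 0)) U ∧
      ∀ t β, (t, β) ∈ U → HasDerivAt (fun x => A (x, β)) (fderiv ℝ A (t, β) (1, 0)) t := by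
    intro A hA
    refine ⟨(hA.fderiv_of_isOpen hU (by simp)).clm_apply contDiffOn_const, fun t β h => ?_⟩
    have h1 := ((hA.differentiableOn (by simp)).differentiableAt (hU.mem_nhds h)).hasFDerivAt
    exact h1.comp_hasDerivAt t ((hasDerivAt_id t).prodMk (hasDerivAt_const t β))
  obtain ⟨hA1, hd1⟩ := diffstep hB
  set A1 : ℝ × ℝ → ℂ := fun p => fderiv ℝ B p (1, 0)
  obtain ⟨hA2, hd2⟩ := diffstep hA1
  set A2 : ℝ × ℝ → ℂ := fun p => fderiv ℝ A1 p (1, 0)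
  obtain ⟨hA3, hd3⟩ := diffstep hA2
  set A3 : ℝ × ℝ → ℂ := fun p => fderiv ℝ A2 p (1, 0)
  have hsub : ∀ t ∈ Set.Icc (-r) r, ∀ β, (t, β) ∈ U := fun t ht β =>
    (abs_le.2 ht).trans_lt hrR
  have hC : IsCompact (Set.Icc (-r) r ×ˢ K) := isCompact_Icc.prod hK
  have hCU : Set.Icc (-r) r ×ˢ K ⊆ U := fun p hp => hsub p.1 hp.1 p.2
  obtain ⟨M1, hM1⟩ := hC.exists_bound_of_continuousOn (hA1.continuousOn.mono hCU)
  obtain ⟨M3, hM3⟩ := hC.exists_bound_of_continuousOn (hA3.continuousOn.mono hCU)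
  have hseg : ∀ t ∈ Set.Icc (-r) r, ∀ s ∈ Set.Icc (0 : ℝ) 1, s * t ∈ Set.Icc (-r) r := by
    intro t ht s hs
    rw [Set.mem_Icc, ← abs_le] at ht ⊢
    rw [abs_mul, abs_of_nonneg hs.1]
    nlinarith [hs.2, abs_nonneg t]
  have hcont : ∀ t ∈ Set.Icc (-r) r, ∀ β,
      ContinuousOn (fun s : ℝ => A1 (s * t, β)) (Set.Icc 0 1) := fun t ht β =>
    hA1.continuousOn.comp (by fun_prop) fun s hs => hsub _ (hseg t ht s hs) β
  have hint : ∀ t ∈ Set.Icc (-r) r, ∀ β,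
      IntervalIntegrable (fun s : ℝ => A1 (s * t, β)) MeasureTheory.volume 0 1 := fun t ht β =>
    ContinuousOn.intervalIntegrable (by rw [Set.uIcc_of_le zero_le_one]; exact hcont t ht β)
  refine ⟨max M1 0 + 2 * max M3 0, by positivity, fun β hβ =>
    ⟨fun t => ∫ s in (0 : ℝ)..1, A1 (s * t, β), fun t ht => ?_, fun t ht => ?_,
      fun t u h1 h2 => ?_⟩⟩
  · have := mul_integral_deriv_eq_sub (b := fun x => B (x, β)) (b' := fun x => A1 (x, β))
      (fun s hs => hd1 _ β (hsub _ (hseg t ht s hs) β)) (hcont t ht β)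
    simpa [h0] using this
  · have := intervalIntegral.norm_integral_le_of_norm_le_const (a := (0 : ℝ)) (b := 1)
      (f := fun s => A1 (s * t, β)) (C := M1) fun s hs => by
        rw [Set.uIoc_of_le zero_le_one] at hs
        exact hM1 (s * t, β) ⟨hseg t ht s ⟨hs.1.le, hs.2⟩, hβ⟩
    simp only [sub_zero, abs_one, mul_one] at this
    linarith [le_max_left M1 0, le_max_right M3 0]
  · have ht : t ∈ Set.Icc (-r) r := ⟨by linarith [h1.1, h2.1], by linarith [h1.2, h2.2]⟩
    have e : (∫ s in (0 : ℝ)..1, A1 (s * (t + u), β)) - 2 * (∫ s in (0 : ℝ)..1, A1 (s * t, β)) +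
        (∫ s in (0 : ℝ)..1, A1 (s * (t - u), β)) =
        ∫ s in (0 : ℝ)..1, (A1 (s * (t + u), β) - 2 * A1 (s * t, β) + A1 (s * (t - u), β)) := by
      rw [intervalIntegral.integral_add ((hint _ h1 β).sub ((hint _ ht β).const_mul 2))
        (hint _ h2 β), intervalIntegral.integral_sub (hint _ h1 β) ((hint _ ht β).const_mul 2),
        intervalIntegral.integral_const_mul]
    have := intervalIntegral.norm_integral_le_of_norm_le_const (a := (0 : ℝ)) (b := 1)
      (f := fun s => A1 (s * (t + u), β) - 2 * A1 (s * t, β) + A1 (s * (t - u), β))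
      (C := 2 * max M3 0 * u ^ 2) fun s hs => by
        rw [Set.uIoc_of_le zero_le_one] at hs
        have hs' : s ∈ Set.Icc (0 : ℝ) 1 := ⟨hs.1.le, hs.2⟩
        have := norm_second_difference_le (a := fun x => A1 (x, β)) (a' := fun x => A2 (x, β))
          (a'' := fun x => A3 (x, β)) (M := max M3 0) (x := s * t) (v := s * u)
          (fun y hy => hd2 y β (hsub y hy β)) (fun y hy => hd3 y β (hsub y hy β))
          (fun y hy => (hM3 (y, β) ⟨hy, hβ⟩).trans (le_max_left _ _))
          (by rw [← mul_add]; exact hseg _ h1 s hs') (by rw [← mul_sub]; exact hseg _ h2 s hs')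
        rw [mul_add, mul_sub]
        refine this.trans (mul_le_mul_of_nonneg_left ?_ (by positivity))
        rw [mul_pow]
        exact mul_le_of_le_one_left (sq_nonneg u) (pow_le_one₀ hs'.1 hs'.2)
    simp only [sub_zero, abs_one, mul_one] at this
    rw [e]
    refine this.trans (mul_le_mul_of_nonneg_right ?_ (sq_nonneg u))
    linarith [le_max_right M1 0]

/-- The kernel of the remainder operator `K3h`. -/
def remainderKernel (f τ : ℝ → ℂ) (α β : ℝ) : ℂ :=
  f β * (τ β - τ α) / ((starRingEnd ℂ) (τ β) - (starRingEnd ℂ) (τ α)) ^ 2 +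
    f α * deriv τ α / (2 * (starRingEnd ℂ) (deriv τ α) ^ 2) * (Real.cot ((α - β) / 2) : ℂ)

theorem Real.cot_periodic : Function.Periodic Real.cot Real.pi := fun x => by
  rw [Real.cot_eq_cos_div_sin, Real.cot_eq_cos_div_sin, Real.cos_add_pi, Real.sin_add_pi,
    neg_div_neg_eq]

theorem remainderKernel_add_int_mul {f τ : ℝ → ℂ} (hf : Function.Periodic f (2 * Real.pi))
    (hτ : Function.Periodic τ (2 * Real.pi)) (α β : ℝ) (m n : ℤ) :
    remainderKernel f τ (α + m * (2 * Real.pi)) (β + n * (2 * Real.pi)) =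
      remainderKernel f τ α β := by
  have hτ' : Function.Periodic (deriv τ) (2 * Real.pi) := fun x => by
    rw [← deriv_comp_add_const, funext hτ]
  have hc : (α + m * (2 * Real.pi) - (β + n * (2 * Real.pi))) / 2 =
      (α - β) / 2 + ((m - n : ℤ) : ℝ) * Real.pi := by push_cast; ring
  simp only [remainderKernel, hf.int_mul _ _, hτ.int_mul _ _, hτ'.int_mul _ _, hc,
    Real.cot_periodic.int_mul _ _]

/-- `t` times the remainder kernel at `(β + t, β)`, extended smoothly to `t = 0`. -/
def kernelNumerator (f τ : ℝ → ℂ) (p : ℝ × ℝ) : ℂ :=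
  -(f p.2 * secantSlope τ p / (starRingEnd ℂ) (secantSlope τ p) ^ 2) +
    f (p.2 + p.1) * deriv τ (p.2 + p.1) / (2 * (starRingEnd ℂ) (deriv τ (p.2 + p.1)) ^ 2) *
      (Real.cos (p.1 / 2) / secantSlope (fun x => (Real.sin (x / 2) : ℂ)) (p.1, 0))

open scoped ContDiff in
theorem contDiff_half_sin : ContDiff ℝ ∞ fun x : ℝ => (Real.sin (x / 2) : ℂ) :=
  Complex.ofRealCLM.contDiff.comp (Real.contDiff_sin.comp (contDiff_id.div_const 2))

theorem sin_half_ne_zero {t : ℝ} (h : |t| < 2 * Real.pi) (h0 : t ≠ 0) : Real.sin (t / 2) ≠ 0 := by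
  rw [abs_lt] at h
  intro hs
  rw [Real.sin_eq_zero_iff_of_lt_of_lt (by linarith) (by linarith)] at hs
  exact h0 (by linarith)

theorem secantSlope_half_sin_zero :
    secantSlope (fun x => (Real.sin (x / 2) : ℂ)) (0, 0) = 1 / 2 := by
  rw [secantSlope_zero]
  have h := (((hasDerivAt_id (0 : ℝ)).div_const 2).sin).ofReal_comp
  simpa using h.deriv

theorem secantSlope_half_sin_ne_zero {t : ℝ} (h : |t| < 2 * Real.pi) :
    secantSlope (fun x => (Real.sin (x / 2) : ℂ)) (t, 0) ≠ 0 := by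
  rcases eq_or_ne t 0 with rfl | h0
  · rw [secantSlope_half_sin_zero]; norm_num
  · intro hs
    have := mul_secantSlope contDiff_half_sin t 0
    rw [hs] at this
    simp only [mul_zero, zero_add, zero_div, Real.sin_zero, Complex.ofReal_zero, sub_zero] at this
    exact sin_half_ne_zero h h0 (Complex.ofReal_eq_zero.1 this.symm)

theorem not_exists_int_mul_two_pi {t : ℝ} (h : |t| < 2 * Real.pi) (h0 : t ≠ 0) :
    ¬ ∃ n : ℤ, t = n * (2 * Real.pi) := by
  rintro ⟨n, hn⟩
  apply sin_half_ne_zero h h0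
  rw [hn, show n * (2 * Real.pi) / 2 = n * Real.pi by ring, Real.sin_int_mul_pi]

open scoped ContDiff in
theorem secantSlope_ne_zero {τ : ℝ → ℂ} (hτ : ContDiff ℝ ∞ τ) (hτ' : ∀ α : ℝ, deriv τ α ≠ 0)
    (hinj : ∀ α β : ℝ, (¬ ∃ n : ℤ, α - β = n * (2 * Real.pi)) → τ α ≠ τ β) {t : ℝ} (β : ℝ)
    (h : |t| < 2 * Real.pi) : secantSlope τ (t, β) ≠ 0 := by
  rcases eq_or_ne t 0 with rfl | h0
  · rw [secantSlope_zero]; exact hτ' β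
  · intro hs
    have := mul_secantSlope hτ t β
    rw [hs, mul_zero] at this
    refine hinj (β + t) β ?_ (sub_eq_zero.1 this.symm)
    rw [add_sub_cancel_left]
    exact not_exists_int_mul_two_pi h h0

open scoped ContDiff in
theorem contDiffOn_kernelNumerator {f τ : ℝ → ℂ} (hf : ContDiff ℝ ∞ f) (hτ : ContDiff ℝ ∞ τ)
    (hτ' : ∀ α : ℝ, deriv τ α ≠ 0)
    (hinj : ∀ α β : ℝ, (¬ ∃ n : ℤ, α - β = n * (2 * Real.pi)) → τ α ≠ τ β) :
    ContDiffOn ℝ ∞ (kernelNumerator f τ) {p | |p.1| < 2 * Real.pi} := by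
  have hconj : ContDiff ℝ ∞ (starRingEnd ℂ) := Complex.conjCLE.contDiff
  have hT := contDiff_secantSlope hτ
  have hS : ContDiff ℝ ∞ fun p : ℝ × ℝ =>
      secantSlope (fun x => (Real.sin (x / 2) : ℂ)) (p.1, 0) :=
    (contDiff_secantSlope contDiff_half_sin).comp (contDiff_fst.prodMk contDiff_const)
  have hd : ContDiff ℝ ∞ fun p : ℝ × ℝ => deriv τ (p.2 + p.1) :=
    (contDiff_infty_iff_deriv.1 hτ).2.comp (contDiff_snd.add contDiff_fst)
  have hcos : ContDiff ℝ ∞ fun p : ℝ × ℝ => (Real.cos (p.1 / 2) : ℂ) :=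
    Complex.ofRealCLM.contDiff.comp (Real.contDiff_cos.comp (contDiff_fst.div_const 2))
  have hf1 : ContDiff ℝ ∞ fun p : ℝ × ℝ => f p.2 := hf.comp contDiff_snd
  have hf2 : ContDiff ℝ ∞ fun p : ℝ × ℝ => f (p.2 + p.1) :=
    hf.comp (contDiff_snd.add contDiff_fst)
  unfold kernelNumerator
  simp only [div_eq_mul_inv _ (_ : ℂ)]
  refine ContDiffOn.add (ContDiffOn.neg ((hf1.mul hT).contDiffOn.mul
    (ContDiffOn.inv ((hconj.comp hT).pow 2).contDiffOn fun p hp => ?_)))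
    (((hf2.mul hd).contDiffOn.mul (ContDiffOn.inv
      (contDiff_const.mul ((hconj.comp hd).pow 2)).contDiffOn fun p hp => ?_)).mul
      (hcos.contDiffOn.mul (ContDiffOn.inv hS.contDiffOn fun p hp => ?_)))
  · exact pow_ne_zero 2 ((map_ne_zero _).2 (secantSlope_ne_zero hτ hτ' hinj p.2 hp))
  · exact mul_ne_zero two_ne_zero (pow_ne_zero 2 ((map_ne_zero _).2 (hτ' _)))
  · exact secantSlope_half_sin_ne_zero hp

theorem kernelNumerator_zero (f τ : ℝ → ℂ) (β : ℝ) : kernelNumerator f τ (0, β) = 0 := by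
  simp only [kernelNumerator]
  rw [secantSlope_half_sin_zero, secantSlope_zero]
  simp only [add_zero, zero_div, Real.cos_zero, Complex.ofReal_one, one_div_one_div]
  ring

open scoped ContDiff in
theorem mul_remainderKernel {f τ : ℝ → ℂ} (hτ : ContDiff ℝ ∞ τ) {t : ℝ} (β : ℝ) (h0 : t ≠ 0) :
    (t : ℂ) * remainderKernel f τ (β + t) β = kernelNumerator f τ (t, β) := by
  have hS : (Real.sin (t / 2) : ℂ) = t * secantSlope (fun x => (Real.sin (x / 2) : ℂ)) (t, 0) := by
    rw [mul_secantSlope contDiff_half_sin]; simp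
  have hτ1 : τ β - τ (β + t) = -(t * secantSlope τ (t, β)) := by
    rw [mul_secantSlope hτ]; ring
  have ht : (t : ℂ) ≠ 0 := by exact_mod_cast h0
  rw [remainderKernel, kernelNumerator, ← map_sub, hτ1, Real.cot_eq_cos_div_sin,
    add_sub_cancel_left, Complex.ofReal_div, hS, map_neg, map_mul, Complex.conj_ofReal, mul_add]
  congr 1
  · rw [neg_sq, mul_pow, mul_neg, neg_div, mul_neg]
    congr 1
    rw [mul_div_assoc', ← mul_div_mul_left _ (_ ^ 2) (pow_ne_zero 2 ht)]
    congr 1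
    ring
  · rw [mul_left_comm]
    congr 1
    rw [mul_div_assoc', mul_div_mul_left _ _ ht]

theorem exists_abs_sub_int_mul_two_pi_le (x : ℝ) :
    ∃ n : ℤ, |x - n * (2 * Real.pi)| ≤ Real.pi := by
  have hpi := Real.pi_pos
  refine ⟨round (x / (2 * Real.pi)), ?_⟩
  have h := abs_sub_round (x / (2 * Real.pi))
  have e : x - round (x / (2 * Real.pi)) * (2 * Real.pi) =
      (x / (2 * Real.pi) - round (x / (2 * Real.pi))) * (2 * Real.pi) := by
    field_simp
  rw [e, abs_mul, abs_of_pos (by positivity : 0 < 2 * Real.pi)]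
  nlinarith

open scoped ContDiff in
/-- Off the diagonal, the remainder kernel and its second difference quotients in the first
variable are bounded. -/
theorem exists_bound_remainderKernel {f τ : ℝ → ℂ}
    (hfper : Function.Periodic f (2 * Real.pi)) (hτper : Function.Periodic τ (2 * Real.pi))
    (hf : ContDiff ℝ ∞ f) (hτ : ContDiff ℝ ∞ τ) (hτ' : ∀ α : ℝ, deriv τ α ≠ 0)
    (hinj : ∀ α β : ℝ, (¬ ∃ n : ℤ, α - β = n * (2 * Real.pi)) → τ α ≠ τ β) :
    ∃ M : ℝ, 0 ≤ M ∧
      (∀ α β, (¬ ∃ n : ℤ, α - β = n * (2 * Real.pi)) → ‖remainderKernel f τ α β‖ ≤ M) ∧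
      ∀ α β u, (¬ ∃ n : ℤ, α - β = n * (2 * Real.pi)) →
        (¬ ∃ n : ℤ, α + u - β = n * (2 * Real.pi)) →
        (¬ ∃ n : ℤ, α - u - β = n * (2 * Real.pi)) →
        ‖remainderKernel f τ (α + u) β - 2 * remainderKernel f τ α β +
          remainderKernel f τ (α - u) β‖ ≤ M * u ^ 2 := by
  have hpi := Real.pi_pos
  have hpi3 := Real.pi_gt_three
  obtain ⟨M, hM0, hM⟩ := exists_bound_quotient (R := 2 * Real.pi) (r := 3 / 2 * Real.pi)
    (by linarith) (isCompact_Icc (a := -Real.pi) (b := Real.pi))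
    (contDiffOn_kernelNumerator hf hτ hτ' hinj) (kernelNumerator_zero f τ)
  have reduce : ∀ α β : ℝ, ∃ (m n : ℤ) (t b : ℝ), α = b + t + m * (2 * Real.pi) ∧
      β = b + n * (2 * Real.pi) ∧ |t| ≤ Real.pi ∧ b ∈ Set.Icc (-Real.pi) Real.pi := by
    intro α β
    obtain ⟨n, hn⟩ := exists_abs_sub_int_mul_two_pi_le β
    obtain ⟨m, hm⟩ := exists_abs_sub_int_mul_two_pi_le (α - (β - n * (2 * Real.pi)))
    exact ⟨m, n, _, _, by ring, by ring, hm, abs_le.1 hn⟩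
  have eq_g : ∀ {b : ℝ} {g : ℝ → ℂ}, (∀ t ∈ Set.Icc (-(3 / 2 * Real.pi)) (3 / 2 * Real.pi),
      (t : ℂ) * g t = kernelNumerator f τ (t, b)) → ∀ (m n : ℤ) (t : ℝ),
      |t| ≤ 3 / 2 * Real.pi →
      (¬ ∃ k : ℤ, b + t + m * (2 * Real.pi) - (b + n * (2 * Real.pi)) = k * (2 * Real.pi)) →
      remainderKernel f τ (b + t + m * (2 * Real.pi)) (b + n * (2 * Real.pi)) = g t := by
    intro b g hg m n t ht hne
    have h0 : t ≠ 0 := by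
      rintro rfl
      exact hne ⟨m - n, by push_cast; ring⟩
    rw [remainderKernel_add_int_mul hfper hτper]
    have ht' : (t : ℂ) ≠ 0 := by exact_mod_cast h0
    exact mul_left_cancel₀ ht' ((mul_remainderKernel hτ b h0).trans (hg t (abs_le.1 ht)).symm)
  have bound : ∀ α β, (¬ ∃ n : ℤ, α - β = n * (2 * Real.pi)) →
      ‖remainderKernel f τ α β‖ ≤ M := by
    intro α β hne
    obtain ⟨m, n, t, b, rfl, rfl, ht, hb⟩ := reduce α β
    obtain ⟨g, hg, hgM, -⟩ := hM b hb
    have ht' : |t| ≤ 3 / 2 * Real.pi := by linarith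
    rw [eq_g hg m n t ht' hne]
    exact hgM t (abs_le.1 ht')
  refine ⟨4 * M, by positivity, fun α β h => (bound α β h).trans (by linarith), ?_⟩
  intro α β u h h1 h2
  rcases le_or_gt |u| (Real.pi / 2) with hu | hu
  · obtain ⟨m, n, t, b, rfl, rfl, ht, hb⟩ := reduce α β
    obtain ⟨g, hg, -, hgM⟩ := hM b hb
    have ht' : |t| ≤ 3 / 2 * Real.pi := by linarith
    have h3 : |t + u| ≤ 3 / 2 * Real.pi := (abs_add_le t u).trans (by linarith)
    have h4 : |t - u| ≤ 3 / 2 * Real.pi := (abs_sub t u).trans (by linarith)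
    have e1 : b + t + m * (2 * Real.pi) + u = b + (t + u) + m * (2 * Real.pi) := by ring
    have e2 : b + t + m * (2 * Real.pi) - u = b + (t - u) + m * (2 * Real.pi) := by ring
    rw [e1] at h1 ⊢
    rw [e2] at h2 ⊢
    rw [eq_g hg m n _ ht' h, eq_g hg m n _ h3 h1, eq_g hg m n _ h4 h2]
    refine (hgM t u (abs_le.1 h3) (abs_le.1 h4)).trans ?_
    nlinarith [mul_nonneg hM0 (sq_nonneg u)]
  · have hu1 : 1 ≤ u ^ 2 := by
      rw [← sq_abs]
      nlinarith
    refine (norm_add_le _ _).trans ((add_le_add_left (norm_sub_le _ _) _).trans ?_)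
    rw [norm_mul, Complex.norm_ofNat]
    nlinarith [bound _ _ h, bound _ _ h1, bound _ _ h2]

theorem gridPt_add (N i j : ℤ) : gridPt N (i + j) = gridPt N i + gridPt N j := by
  simp only [gridPt]; push_cast; ring

theorem gridPt_sub (N i j : ℤ) : gridPt N (i - j) = gridPt N i - gridPt N j := by
  simp only [gridPt]; push_cast; ring

theorem hgrid_pos {N : ℤ} (hN : 2 ≤ N) : 0 < hgrid N := by
  have : (0 : ℝ) < N := by exact_mod_cast (by lia : 0 < N)
  have := Real.pi_pos
  unfold hgrid
  positivity

theorem hgrid_mul_self {N : ℤ} (hN : 2 ≤ N) : hgrid N * N = 2 * Real.pi :=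
  div_mul_cancel₀ _ (by exact_mod_cast (by lia : N ≠ 0))

theorem gridPt_self {N : ℤ} (hN : 2 ≤ N) : gridPt N N = 2 * Real.pi := by
  rw [gridPt, mul_comm, hgrid_mul_self hN]

theorem abs_gridPt_le {N k : ℤ} (hN : 2 ≤ N) (hk : k ∈ idxs N) : |gridPt N k| ≤ Real.pi := by
  rw [idxs, Finset.mem_Icc] at hk
  have h : 2 * |k| ≤ N := by
    rcases abs_cases k with ⟨h, _⟩ | ⟨h, _⟩ <;> lia
  have h' : 2 * |(k : ℝ)| ≤ N := by exact_mod_cast h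
  rw [gridPt, abs_mul, abs_of_pos (hgrid_pos hN)]
  nlinarith [hgrid_pos hN, hgrid_mul_self hN]

theorem card_idxs {N : ℤ} (hN : 2 ≤ N) (he : Even N) : ((idxs N).card : ℤ) = N := by
  obtain ⟨m, rfl⟩ := he
  rw [idxs, Int.card_Icc]
  lia

theorem eq_of_dvd_sub_of_mem_idxs {N k l : ℤ} (hN : 2 ≤ N) (he : Even N) (hk : k ∈ idxs N)
    (hl : l ∈ idxs N) (h : N ∣ k - l) : k = l := by
  obtain ⟨m, rfl⟩ := he
  rw [idxs, Finset.mem_Icc] at hk hl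
  have := Int.eq_zero_of_abs_lt_dvd h (by rw [abs_lt]; constructor <;> lia)
  lia

/-- The sum of a periodic function over one period is translation invariant. -/
theorem sum_idxs_add {N : ℤ} (hN : 2 ≤ N) (he : Even N) {v : ℤ → ℂ}
    (hv : Function.Periodic v N) (m : ℤ) :
    ∑ j ∈ idxs N, v (j + m) = ∑ j ∈ idxs N, v j := by
  have step : ∀ m, ∑ j ∈ idxs N, v (j + (m + 1)) = ∑ j ∈ idxs N, v (j + m) := by
    intro m
    obtain ⟨p, rfl⟩ := he
    have hp : (p + p) / 2 = p := by lia
    have e : ∑ j ∈ idxs (p + p), v (j + (m + 1)) = ∑ j ∈ Finset.Icc (-p + 2) (p + 1), v (j + m) := by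
      refine Finset.sum_nbij' (· + 1) (· - 1) ?_ ?_ ?_ ?_ ?_
      · intro a ha; simp only [idxs, hp, Finset.mem_Icc] at *; lia
      · intro a ha; simp only [idxs, hp, Finset.mem_Icc] at *; lia
      · intro a _; simp
      · intro a _; simp
      · intro a _; congr 1; ring
    have h1 : Finset.Icc (-p + 2) (p + 1) = insert (p + 1) (Finset.Icc (-p + 2) p) := by
      ext x; simp only [Finset.mem_Icc, Finset.mem_insert]; lia
    have h2 : idxs (p + p) = insert (-p + 1) (Finset.Icc (-p + 2) p) := by
      ext x; simp only [idxs, hp, Finset.mem_Icc, Finset.mem_insert]; lia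
    rw [e, h1, h2, Finset.sum_insert (by simp), Finset.sum_insert (by simp), ← hv (-p + 1 + m)]
    congr 2; ring
  induction m using Int.induction_on with
  | zero => simp
  | succ i ih => rw [step, ih]
  | pred i ih => rw [← ih, ← step, sub_add_cancel]

/-- The additive character `n ↦ exp (2πi n / N)`. -/
def gridChar (N n : ℤ) : ℂ := Complex.exp (Complex.I * (gridPt N n : ℂ))

theorem exp_mul_gridPt (N k j : ℤ) :
    Complex.exp (Complex.I * (k : ℂ) * (gridPt N j : ℂ)) = gridChar N (k * j) := by
  simp only [gridChar, gridPt]; congr 1; push_cast; ring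

theorem exp_neg_mul_gridPt (N k j : ℤ) :
    Complex.exp (-(Complex.I * (k : ℂ) * (gridPt N j : ℂ))) = gridChar N (-(k * j)) := by
  simp only [gridChar, gridPt]; congr 1; push_cast; ring

theorem gridChar_add (N a b : ℤ) : gridChar N (a + b) = gridChar N a * gridChar N b := by
  rw [gridChar, gridPt_add, gridChar, gridChar, ← Complex.exp_add]; congr 1; push_cast; ring

theorem gridChar_zero (N : ℤ) : gridChar N 0 = 1 := by simp [gridChar, gridPt]

theorem conj_gridChar (N a : ℤ) : (starRingEnd ℂ) (gridChar N a) = gridChar N (-a) := by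
  simp only [gridChar, ← Complex.exp_conj, gridPt]; congr 1
  simp

theorem gridChar_eq_one_iff {N a : ℤ} (hN : 2 ≤ N) : gridChar N a = 1 ↔ N ∣ a := by
  have hN0 : (N : ℂ) ≠ 0 := by exact_mod_cast (by lia : N ≠ 0)
  have hpi : (Real.pi : ℂ) ≠ 0 := by exact_mod_cast Real.pi_ne_zero
  rw [gridChar, Complex.exp_eq_one_iff]
  simp only [gridPt, hgrid]
  push_cast
  refine exists_congr fun n => ?_
  have : (a : ℂ) = N * n ↔ a = N * n := by exact_mod_cast Iff.rfl
  rw [← this]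
  field_simp

theorem gridChar_mul_periodic {N : ℤ} (hN : 2 ≤ N) (k : ℤ) :
    Function.Periodic (fun j => gridChar N (k * j)) N := fun j => by
  simp only [mul_add, gridChar_add, (gridChar_eq_one_iff hN).2 (dvd_mul_left N k), mul_one]

/-- Orthogonality of the discrete characters. -/
theorem sum_gridChar {N : ℤ} (hN : 2 ≤ N) (he : Even N) (k : ℤ) :
    ∑ j ∈ idxs N, gridChar N (k * j) = if N ∣ k then (N : ℂ) else 0 := by
  split_ifs with h
  · rw [Finset.sum_congr rfl fun j _ => (gridChar_eq_one_iff hN).2 (h.mul_right j)]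
    have := card_idxs hN he
    simp only [Finset.sum_const, nsmul_eq_mul, mul_one]
    exact_mod_cast this
  · have hs := sum_idxs_add hN he (gridChar_mul_periodic hN k) 1
    simp only [mul_add, mul_one, gridChar_add, ← Finset.sum_mul] at hs
    by_contra h0
    exact h ((gridChar_eq_one_iff hN).1 (mul_left_cancel₀ h0 (hs.trans (mul_one _).symm)))

theorem dft_idft {N k : ℤ} (hN : 2 ≤ N) (he : Even N) (c : ℤ → ℂ) (hk : k ∈ idxs N) :
    dft N (idft N c) k = c k := by
  have hN0 : (N : ℂ) ≠ 0 := by exact_mod_cast (by lia : N ≠ 0)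
  simp only [dft, idft, exp_mul_gridPt, exp_neg_mul_gridPt, Finset.sum_mul]
  rw [Finset.sum_comm, Finset.sum_eq_single k]
  · have : ∀ j, c k * gridChar N (k * j) * gridChar N (-(k * j)) = c k := fun j => by
      rw [mul_assoc, ← gridChar_add, add_neg_cancel, gridChar_zero, mul_one]
    have hc : ((idxs N).card : ℂ) = N := by exact_mod_cast card_idxs hN he
    simp only [this, Finset.sum_const, nsmul_eq_mul, hc]
    rw [inv_mul_cancel_left₀ hN0]
  · intro l hl hlk
    have : ∀ j, c l * gridChar N (l * j) * gridChar N (-(k * j)) =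
        c l * gridChar N ((l - k) * j) := fun j => by
      rw [mul_assoc, ← gridChar_add]; congr 2; ring
    simp only [this, ← Finset.mul_sum]
    rw [sum_gridChar hN he, if_neg fun h => hlk (eq_of_dvd_sub_of_mem_idxs hN he hl hk h),
      mul_zero]
  · exact fun h => absurd hk h

theorem idft_dft {N j : ℤ} (hN : 2 ≤ N) (he : Even N) (f : ℤ → ℂ) (hj : j ∈ idxs N) :
    idft N (dft N f) j = f j := by
  have hN0 : (N : ℂ) ≠ 0 := by exact_mod_cast (by lia : N ≠ 0)
  simp only [dft, idft, exp_mul_gridPt, exp_neg_mul_gridPt]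
  simp only [mul_assoc, Finset.sum_mul, ← Finset.mul_sum]
  rw [Finset.sum_comm, Finset.sum_eq_single j]
  · have : ∀ k, f j * (gridChar N (-(k * j)) * gridChar N (k * j)) = f j := fun k => by
      rw [← gridChar_add, neg_add_cancel, gridChar_zero, mul_one]
    have hc : ((idxs N).card : ℂ) = N := by exact_mod_cast card_idxs hN he
    simp only [this, Finset.sum_const, nsmul_eq_mul, hc]
    rw [inv_mul_cancel_left₀ hN0]
  · intro l hl hlj
    have : ∀ k, f l * (gridChar N (-(k * l)) * gridChar N (k * j)) =
        f l * gridChar N ((j - l) * k) := fun k => by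
      rw [← gridChar_add]; congr 2; ring
    simp only [this, ← Finset.mul_sum]
    rw [sum_gridChar hN he,
      if_neg fun h => hlj (eq_of_dvd_sub_of_mem_idxs hN he hj hl h).symm, mul_zero]
  · exact fun h => absurd hj h

/-- The unscaled squared discrete norm. -/
def energy (N : ℤ) (f : ℤ → ℂ) : ℝ := ∑ j ∈ idxs N, ‖f j‖ ^ 2

theorem energy_nonneg (N : ℤ) (f : ℤ → ℂ) : 0 ≤ energy N f :=
  Finset.sum_nonneg fun _ _ => sq_nonneg _

/-- Parseval's identity for the inverse discrete Fourier transform. -/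
theorem energy_idft {N : ℤ} (hN : 2 ≤ N) (he : Even N) (c : ℤ → ℂ) :
    energy N (idft N c) = N * energy N c := by
  have hN0 : (N : ℂ) ≠ 0 := by exact_mod_cast (by lia : N ≠ 0)
  have hpair : ∀ f : ℤ → ℂ, ∑ j ∈ idxs N, idft N c j * (starRingEnd ℂ) (f j) =
      N * ∑ k ∈ idxs N, c k * (starRingEnd ℂ) (dft N f k) := by
    intro f
    simp only [dft, idft, exp_mul_gridPt, exp_neg_mul_gridPt, map_mul, map_sum, map_inv₀,
      map_intCast, conj_gridChar, neg_neg, Finset.sum_mul, Finset.mul_sum]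
    rw [Finset.sum_comm]
    refine Finset.sum_congr rfl fun k _ => Finset.sum_congr rfl fun j _ => ?_
    field_simp
  have h := hpair (idft N c)
  have hc : ∑ k ∈ idxs N, c k * (starRingEnd ℂ) (dft N (idft N c) k) =
      ∑ k ∈ idxs N, c k * (starRingEnd ℂ) (c k) :=
    Finset.sum_congr rfl fun k hk => by rw [dft_idft hN he c hk]
  rw [hc] at h
  simp only [Complex.mul_conj, Complex.normSq_eq_norm_sq] at h
  exact_mod_cast h

theorem energy_congr {N : ℤ} {f g : ℤ → ℂ} (h : ∀ j ∈ idxs N, f j = g j) :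
    energy N f = energy N g :=
  Finset.sum_congr rfl fun j hj => by rw [h j hj]

theorem energy_eq_dft {N : ℤ} (hN : 2 ≤ N) (he : Even N) (f : ℤ → ℂ) :
    energy N f = N * energy N (dft N f) := by
  rw [← energy_idft hN he, energy_congr fun j hj => idft_dft hN he f hj]

/-- Comparison of two functions through their Fourier coefficients. -/
theorem energy_le_of_dft_le {N : ℤ} (hN : 2 ≤ N) (he : Even N) {f g : ℤ → ℂ} {C : ℝ}
    (h : ∀ k ∈ idxs N, ‖dft N f k‖ ≤ C * ‖dft N g k‖) :
    energy N f ≤ C ^ 2 * energy N g := by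
  have hN0 : (0 : ℝ) ≤ N := by exact_mod_cast (by lia : 0 ≤ N)
  rw [energy_eq_dft hN he f, energy_eq_dft hN he g, mul_left_comm]
  refine mul_le_mul_of_nonneg_left ?_ hN0
  rw [energy, energy, Finset.mul_sum]
  refine Finset.sum_le_sum fun k hk => ?_
  rw [← mul_pow]
  exact pow_le_pow_left₀ (norm_nonneg _) (h k hk) 2

theorem dft_add_const {N : ℤ} (hN : 2 ≤ N) (he : Even N) {v : ℤ → ℂ}
    (hv : Function.Periodic v N) (m k : ℤ) :
    dft N (fun j => v (j + m)) k = gridChar N (k * m) * dft N v k := by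
  have hper : Function.Periodic (fun j => v j * gridChar N (-(k * j))) N := fun j => by
    have := gridChar_mul_periodic hN (-k) j
    simp only [neg_mul] at this
    simp only [hv j, this]
  have h := sum_idxs_add hN he hper m
  simp only [dft, exp_neg_mul_gridPt]
  rw [← h, mul_left_comm]
  congr 1
  rw [Finset.mul_sum]
  refine Finset.sum_congr rfl fun j _ => ?_
  rw [mul_left_comm, ← gridChar_add]
  congr 2; ring

theorem norm_dft_second_difference {N : ℤ} (hN : 2 ≤ N) (he : Even N) {v : ℤ → ℂ}
    (hv : Function.Periodic v N) (k : ℤ) :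
    ‖dft N (fun j => v (j + 2) - 2 * v j + v (j - 2)) k‖ =
      4 * Real.sin (gridPt N k) ^ 2 * ‖dft N v k‖ := by
  have h : dft N (fun j => v (j + 2) - 2 * v j + v (j - 2)) k =
      dft N (fun j => v (j + 2)) k - 2 * dft N v k + dft N (fun j => v (j + -2)) k := by
    simp only [dft, ← sub_eq_add_neg, add_mul, sub_mul, Finset.sum_add_distrib,
      Finset.sum_sub_distrib, mul_assoc, ← Finset.mul_sum]
    ring
  have hz : gridChar N (k * 2) - 2 + gridChar N (k * -2) =
      ((-(4 * Real.sin (gridPt N k) ^ 2) : ℝ) : ℂ) := by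
    have h1 : gridChar N (k * 2) = gridChar N k * gridChar N k := by
      rw [← gridChar_add]; congr 1; ring
    have h2 : gridChar N (k * -2) = gridChar N (-k) * gridChar N (-k) := by
      rw [← gridChar_add]; congr 1; ring
    have h3 : gridChar N k * gridChar N (-k) = 1 := by
      rw [← gridChar_add, add_neg_cancel, gridChar_zero]
    have h4 : gridChar N k - gridChar N (-k) = 2 * Complex.I * Real.sin (gridPt N k) := by
      have e : gridPt N (-k) = -gridPt N k := by simp [gridPt]
      rw [gridChar, gridChar, e, mul_comm Complex.I, mul_comm Complex.I, Complex.exp_mul_I,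
        Complex.exp_mul_I]
      push_cast
      rw [Complex.cos_neg, Complex.sin_neg]
      ring
    have h5 : (gridChar N k - gridChar N (-k)) ^ 2 =
        gridChar N (k * 2) - 2 + gridChar N (k * -2) := by
      rw [h1, h2]; linear_combination (-2) * h3
    rw [← h5, h4]
    push_cast
    linear_combination (4 * Complex.sin (gridPt N k) ^ 2) * Complex.I_sq
  rw [h, dft_add_const hN he hv, dft_add_const hN he hv, ← sub_mul, ← add_mul, hz, norm_mul,
    Complex.norm_real, norm_neg, Real.norm_of_nonneg (by positivity)]

/-- An integral operator with bounded kernel is bounded on the grid, uniformly in `N`. -/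
theorem energy_kernel_le {N : ℤ} (hN : 2 ≤ N) (he : Even N) {M : ℝ} (hM0 : 0 ≤ M) (q : ℤ → ℂ)
    (G : ℤ → ℤ → ℂ) (hG : ∀ i j, Odd (j - i) → ‖G i j‖ ≤ M) :
    energy N (fun i => ((hgrid N / Real.pi : ℝ) : ℂ) *
      ∑ j ∈ (idxs N).filter (fun j => Odd (j - i)), q j * G i j) ≤ 4 * M ^ 2 * energy N q := by
  have hpi := Real.pi_pos
  have hh := hgrid_pos hN
  have hc : ((idxs N).card : ℝ) = N := by exact_mod_cast card_idxs hN he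
  have hpt : ∀ i, ‖((hgrid N / Real.pi : ℝ) : ℂ) *
      ∑ j ∈ (idxs N).filter (fun j => Odd (j - i)), q j * G i j‖ ^ 2 ≤
      (hgrid N / Real.pi) ^ 2 * (M ^ 2 * (N * energy N q)) := by
    intro i
    rw [norm_mul, mul_pow, Complex.norm_real, Real.norm_of_nonneg (by positivity)]
    refine mul_le_mul_of_nonneg_left ?_ (by positivity)
    have h1 : ‖∑ j ∈ (idxs N).filter (fun j => Odd (j - i)), q j * G i j‖ ≤
        M * ∑ j ∈ idxs N, ‖q j‖ := by
      refine (norm_sum_le _ _).trans ?_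
      rw [Finset.mul_sum]
      refine (Finset.sum_le_sum (g := fun j => M * ‖q j‖) fun j hj => ?_).trans
        (Finset.sum_le_sum_of_subset_of_nonneg (Finset.filter_subset _ _)
          fun _ _ _ => by positivity)
      rw [norm_mul, mul_comm]
      exact mul_le_mul_of_nonneg_right (hG i j (Finset.mem_filter.1 hj).2) (norm_nonneg _)
    refine (pow_le_pow_left₀ (norm_nonneg _) h1 2).trans ?_
    rw [mul_pow, ← hc]
    exact mul_le_mul_of_nonneg_left sq_sum_le_card_mul_sum_sq (sq_nonneg M)
  refine (Finset.sum_le_sum fun i _ => hpt i).trans ?_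
  rw [Finset.sum_const, nsmul_eq_mul, hc]
  have e : hgrid N / Real.pi * N = 2 := by
    rw [div_mul_eq_mul_div, hgrid_mul_self hN]; field_simp
  have : N * ((hgrid N / Real.pi) ^ 2 * (M ^ 2 * (N * energy N q))) =
      (hgrid N / Real.pi * N) ^ 2 * M ^ 2 * energy N q := by ring
  rw [this, e]
  norm_num

theorem not_exists_gridPt_sub_eq {N i j : ℤ} (hN : 2 ≤ N) (he : Even N) (h : Odd (j - i)) :
    ¬ ∃ n : ℤ, gridPt N i - gridPt N j = n * (2 * Real.pi) := by
  rintro ⟨n, hn⟩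
  rw [← gridPt_sub, ← hgrid_mul_self hN, gridPt, mul_comm (hgrid N), ← mul_assoc] at hn
  have h1 : ((i - j : ℤ) : ℝ) = ((n * N : ℤ) : ℝ) := by
    push_cast at hn ⊢
    exact mul_right_cancel₀ (hgrid_pos hN).ne' hn
  have h2 : i - j = n * N := by exact_mod_cast h1
  have h3 : Even (i - j) := h2 ▸ he.mul_left n
  rw [← neg_sub, odd_neg] at h
  exact (Int.not_even_iff_odd.2 h) h3

theorem K3h_eq (N : ℤ) (f τ : ℝ → ℂ) (q : ℤ → ℂ) (i : ℤ) :
    K3h N f τ q i = ((hgrid N / Real.pi : ℝ) : ℂ) *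
      ∑ j ∈ (idxs N).filter (fun j => Odd (j - i)),
        q j * remainderKernel f τ (gridPt N i) (gridPt N j) := rfl

/-- Evaluating `K3h` at an even translate keeps the summation set. -/
theorem K3h_add_even (N : ℤ) (f τ : ℝ → ℂ) (q : ℤ → ℂ) (i : ℤ) {m : ℤ} (hm : Even m) :
    K3h N f τ q (i + m) = ((hgrid N / Real.pi : ℝ) : ℂ) *
      ∑ j ∈ (idxs N).filter (fun j => Odd (j - i)),
        q j * remainderKernel f τ (gridPt N i + gridPt N m) (gridPt N j) := by
  rw [K3h_eq, gridPt_add]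
  congr 2
  refine Finset.filter_congr fun j _ => ?_
  rw [← sub_sub, Int.odd_sub]
  simp [hm]

theorem K3h_periodic {N : ℤ} (hN : 2 ≤ N) (he : Even N) {f τ : ℝ → ℂ}
    (hf : Function.Periodic f (2 * Real.pi)) (hτ : Function.Periodic τ (2 * Real.pi))
    (q : ℤ → ℂ) : Function.Periodic (K3h N f τ q) N := fun i => by
  rw [K3h_add_even _ _ _ _ _ he, gridPt_self hN, K3h_eq]
  have h : ∀ α β, remainderKernel f τ (α + 2 * Real.pi) β = remainderKernel f τ α β := fun α β => by
    simpa using remainderKernel_add_int_mul hf hτ α β 1 0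
  simp only [h]

theorem exists_filter_bound {ρ : ℝ → ℝ} (hρ : IsFilter ρ) :
    ∃ R : ℝ, 0 ≤ R ∧ (∀ x, |x| ≤ Real.pi → |ρ x| ≤ R) ∧
      ∀ x, |x| ≤ Real.pi → |x * ρ x| ≤ R * |Real.sin x| := by
  have hpi := Real.pi_pos
  have hpi3 := Real.pi_gt_three
  obtain ⟨r, hr, hsm⟩ := hρ.smooth
  have hr0 : (r : WithTop ℕ∞) ≠ 0 := by exact_mod_cast (by lia : r ≠ 0)
  have hr1 : (1 : WithTop ℕ∞) ≤ r := by exact_mod_cast (by lia : 1 ≤ r)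
  have hK : IsCompact (Set.Icc (-Real.pi) Real.pi) := isCompact_Icc
  obtain ⟨C, hC⟩ := hK.exists_bound_of_continuousOn hsm.continuous.continuousOn
  obtain ⟨L, hL⟩ := hK.exists_bound_of_continuousOn (hsm.continuous_deriv hr1).continuousOn
  have hC0 : 0 ≤ C := (norm_nonneg _).trans (hC 0 ⟨by linarith, by linarith⟩)
  have hL0 : 0 ≤ L := (norm_nonneg _).trans (hL 0 ⟨by linarith, by linarith⟩)
  have hlip : ∀ x ∈ Set.Icc (-Real.pi) Real.pi, |ρ x| ≤ L * (Real.pi - x) := by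
    intro x hx
    have := (convex_Icc (-Real.pi) Real.pi).norm_image_sub_le_of_norm_deriv_le
      (fun y _ => hsm.differentiable hr0 y) hL (x := Real.pi) (y := x)
      ⟨by linarith, le_rfl⟩ hx
    rw [hρ.zero_at_pi, sub_zero, Real.norm_eq_abs, Real.norm_eq_abs, abs_sub_comm,
      abs_of_nonneg (by linarith [hx.2] : 0 ≤ Real.pi - x)] at this
    exact this
  have hpos : ∀ x, 0 ≤ x → x ≤ Real.pi →
      x * |ρ x| ≤ (Real.pi * C + Real.pi ^ 2 * L) * Real.sin x := by
    intro x hx0 hx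
    have hmem : x ∈ Set.Icc (-Real.pi) Real.pi := ⟨by linarith, hx⟩
    have hs0 := Real.sin_nonneg_of_nonneg_of_le_pi hx0 hx
    rw [add_mul]
    rcases le_total x (Real.pi / 2) with h | h
    · have hs : x ≤ Real.pi * Real.sin x := by
        have := Real.mul_le_sin hx0 h
        rw [div_mul_eq_mul_div, div_le_iff₀ hpi] at this
        nlinarith
      have h1 : |ρ x| ≤ C := hC x hmem
      have h2 : 0 ≤ Real.pi ^ 2 * L * Real.sin x := by positivity
      have h3 : x * |ρ x| ≤ (Real.pi * Real.sin x) * C := by gcongr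
      linarith
    · have hs : Real.pi - x ≤ Real.pi * Real.sin x := by
        have := Real.mul_le_sin (x := Real.pi - x) (by linarith) (by linarith)
        rw [Real.sin_pi_sub, div_mul_eq_mul_div, div_le_iff₀ hpi] at this
        nlinarith
      have h2 : 0 ≤ Real.pi * C * Real.sin x := by positivity
      have h3 : x * |ρ x| ≤ Real.pi * (L * (Real.pi * Real.sin x)) := by
        have := hlip x hmem
        gcongr
        exact this.trans (by gcongr)
      linarith
  refine ⟨C + (Real.pi * C + Real.pi ^ 2 * L), by positivity, fun x hx => ?_, fun x hx => ?_⟩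
  · have := hC x (abs_le.1 hx)
    rw [Real.norm_eq_abs] at this
    have : 0 ≤ Real.pi * C + Real.pi ^ 2 * L := by positivity
    linarith
  · have h1 := hpos |x| (abs_nonneg x) hx
    have h2 : ρ |x| = ρ x := by
      rcases abs_choice x with h | h <;> rw [h]
      exact hρ.even x
    have h3 : Real.sin |x| ≤ |Real.sin x| := by
      rcases abs_choice x with h | h <;> rw [h]
      · exact le_abs_self _
      · rw [Real.sin_neg]; exact neg_le_abs _
    rw [h2] at h1
    rw [abs_mul]
    have h4 : 0 ≤ Real.pi * C + Real.pi ^ 2 * L := by positivity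
    nlinarith [mul_le_mul_of_nonneg_left h3 h4, mul_nonneg hC0 (abs_nonneg (Real.sin x))]

theorem energy_filterP_le {N : ℤ} (hN : 2 ≤ N) (he : Even N) {ρ : ℝ → ℝ} {R : ℝ}
    (hR : ∀ x, |x| ≤ Real.pi → |ρ x| ≤ R) (φ : ℤ → ℂ) :
    energy N (filterP N ρ φ) ≤ R ^ 2 * energy N φ := by
  refine energy_le_of_dft_le hN he fun k hk => ?_
  rw [filterP, dft_idft hN he _ hk, norm_mul, Complex.norm_real, Real.norm_eq_abs]
  exact mul_le_mul_of_nonneg_right (hR _ (abs_gridPt_le hN hk)) (norm_nonneg _)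

theorem norm_dft_Dh {N k : ℤ} (hN : 2 ≤ N) (he : Even N) (ρ : ℝ → ℝ) (v : ℤ → ℂ)
    (hk : k ∈ idxs N) : ‖dft N (Dh N ρ v) k‖ = |k * ρ (gridPt N k)| * ‖dft N v k‖ := by
  rw [Dh, dft_idft hN he _ hk, mul_assoc Complex.I, norm_mul, norm_mul, Complex.norm_I, one_mul]
  congr 1
  rw [← Real.norm_eq_abs, ← Complex.norm_real]
  push_cast; rfl

theorem energy_Dh_le {N : ℤ} (hN : 2 ≤ N) (he : Even N) (ρ : ℝ → ℝ) (v : ℤ → ℂ) :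
    energy N (Dh N ρ v) ≤ energy N v + energy N (Dh N ρ (Dh N ρ v)) := by
  have hN0 : (0 : ℝ) ≤ N := by exact_mod_cast (by lia : 0 ≤ N)
  rw [energy_eq_dft hN he v, energy_eq_dft hN he (Dh N ρ v),
    energy_eq_dft hN he (Dh N ρ (Dh N ρ v)), ← mul_add]
  refine mul_le_mul_of_nonneg_left ?_ hN0
  rw [energy, energy, energy, ← Finset.sum_add_distrib]
  refine Finset.sum_le_sum fun k hk => ?_
  rw [norm_dft_Dh hN he ρ (Dh N ρ v) hk, norm_dft_Dh hN he ρ v hk]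
  nlinarith [mul_nonneg (sq_nonneg ‖dft N v k‖) (sq_nonneg (|k * ρ (gridPt N k)| ^ 2 - 1)),
    mul_nonneg (sq_nonneg ‖dft N v k‖) (sq_nonneg (|k * ρ (gridPt N k)| ^ 2)),
    sq_nonneg ‖dft N v k‖]

/-- Two filtered derivatives are controlled by the second difference with step `2h`. -/
theorem energy_Dh_Dh_le {N : ℤ} (hN : 2 ≤ N) (he : Even N) {ρ : ℝ → ℝ} {R : ℝ}
    (hR : ∀ x, |x| ≤ Real.pi → |x * ρ x| ≤ R * |Real.sin x|) {v : ℤ → ℂ}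
    (hv : Function.Periodic v N) :
    energy N (Dh N ρ (Dh N ρ v)) ≤
      (R ^ 2 / (4 * hgrid N ^ 2)) ^ 2 * energy N (fun j => v (j + 2) - 2 * v j + v (j - 2)) := by
  have hh := hgrid_pos hN
  refine energy_le_of_dft_le hN he fun k hk => ?_
  rw [norm_dft_Dh hN he ρ _ hk, norm_dft_Dh hN he ρ _ hk, norm_dft_second_difference hN he hv,
    ← mul_assoc, ← mul_assoc]
  refine mul_le_mul_of_nonneg_right ?_ (norm_nonneg _)
  have h := pow_le_pow_left₀ (abs_nonneg _) (hR _ (abs_gridPt_le hN hk)) 2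
  have e : gridPt N k * ρ (gridPt N k) = hgrid N * (k * ρ (gridPt N k)) := by
    nth_rewrite 1 [gridPt]; ring
  rw [e, sq_abs, mul_pow, mul_pow R, sq_abs] at h
  rw [abs_mul_abs_self, ← sq, div_mul_eq_mul_div, le_div_iff₀ (by positivity)]
  linarith

theorem l2norm_le_of_energy_le {N : ℤ} (hN : 2 ≤ N) {f g : ℤ → ℂ} {c : ℝ} (hc : 0 ≤ c)
    (h : energy N f ≤ c ^ 2 * energy N g) : l2norm N f ≤ c * l2norm N g := by
  have hh := hgrid_pos hN
  change Real.sqrt (hgrid N * energy N f) ≤ c * Real.sqrt (hgrid N * energy N g)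
  refine Real.sqrt_le_iff.2 ⟨by positivity, ?_⟩
  rw [mul_pow, Real.sq_sqrt (mul_nonneg hh.le (energy_nonneg N g))]
  nlinarith

theorem Lh_eq (N : ℤ) (f τ : ℝ → ℂ) (q : ℤ → ℂ) (i : ℤ) :
    Lh N f τ q i =
      -(f (gridPt N i) * deriv τ (gridPt N i) /
          (2 * (starRingEnd ℂ) (deriv τ (gridPt N i)) ^ 2)) * Hh N q i + K3h N f τ q i := by
  rw [Lh, Hh, K3h, mul_left_comm, ← mul_add]
  congr 1
  rw [Finset.mul_sum, ← Finset.sum_add_distrib]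
  refine Finset.sum_congr rfl fun j _ => ?_
  ring

/-- The remainder operator and its two filtered derivatives are bounded uniformly in `N`. -/
theorem exists_energy_K3h_le {f τ : ℝ → ℂ}
    (hfper : Function.Periodic f (2 * Real.pi)) (hτper : Function.Periodic τ (2 * Real.pi))
    (hf : ContDiff ℝ (⊤ : ℕ∞) f) (hτ : ContDiff ℝ (⊤ : ℕ∞) τ)
    (hτ' : ∀ α : ℝ, deriv τ α ≠ 0)
    (hinj : ∀ α β : ℝ, (¬ ∃ n : ℤ, α - β = n * (2 * Real.pi)) → τ α ≠ τ β) {ρ : ℝ → ℝ} {R : ℝ}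
    (hR : ∀ x, |x| ≤ Real.pi → |x * ρ x| ≤ R * |Real.sin x|) :
    ∃ C : ℝ, 0 ≤ C ∧ ∀ N : ℤ, 2 ≤ N → Even N → ∀ q : ℤ → ℂ, ∀ k : ℕ, k ≤ 2 →
      energy N ((Dh N ρ)^[k] (K3h N f τ q)) ≤ C ^ 2 * energy N q := by
  obtain ⟨M, hM0, hM, hM2⟩ := exists_bound_remainderKernel hfper hτper hf hτ hτ' hinj
  refine ⟨2 * M * (1 + R ^ 2), by positivity, fun N hN he q k hk => ?_⟩
  have hh := hgrid_pos hN
  have hq := energy_nonneg N q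
  set v := K3h N f τ q with hv
  have h0 : energy N v ≤ 4 * M ^ 2 * energy N q :=
    energy_kernel_le hN he hM0 q (fun i j => remainderKernel f τ (gridPt N i) (gridPt N j))
      fun i j hij => hM _ _ (not_exists_gridPt_sub_eq hN he hij)
  have hdiff : energy N (fun j => v (j + 2) - 2 * v j + v (j - 2)) ≤
      4 * (M * gridPt N 2 ^ 2) ^ 2 * energy N q := by
    have e : (fun i => v (i + 2) - 2 * v i + v (i - 2)) =
        fun i => ((hgrid N / Real.pi : ℝ) : ℂ) *
          ∑ j ∈ (idxs N).filter (fun j => Odd (j - i)),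
            q j * (remainderKernel f τ (gridPt N i + gridPt N 2) (gridPt N j) -
              2 * remainderKernel f τ (gridPt N i) (gridPt N j) +
              remainderKernel f τ (gridPt N i - gridPt N 2) (gridPt N j)) := by
      funext i
      have e2 : gridPt N i - gridPt N 2 = gridPt N i + gridPt N (-2) := by
        rw [← gridPt_sub, ← gridPt_add, sub_eq_add_neg]
      rw [sub_eq_add_neg i 2, e2, hv, K3h_add_even _ _ _ _ _ even_two,
        K3h_add_even _ _ _ _ _ even_two.neg, K3h_eq]
      simp only [mul_add, mul_sub, Finset.sum_add_distrib, Finset.sum_sub_distrib,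
        mul_left_comm _ (2 : ℂ), ← Finset.mul_sum]
    rw [e]
    refine energy_kernel_le hN he (by positivity) q _ fun i j hij => hM2 _ _ _
      (not_exists_gridPt_sub_eq hN he hij) ?_ ?_
    · rw [← gridPt_add]
      exact not_exists_gridPt_sub_eq hN he (by rw [← sub_sub]; exact hij.sub_even even_two)
    · rw [← gridPt_sub]
      exact not_exists_gridPt_sub_eq hN he (by
        rw [show j - (i - 2) = j - i + 2 by ring]; exact hij.add_even even_two)
  have h2 : energy N (Dh N ρ (Dh N ρ v)) ≤ 4 * M ^ 2 * R ^ 4 * energy N q := by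
    refine (energy_Dh_Dh_le hN he hR (K3h_periodic hN he hfper hτper q)).trans
      ((mul_le_mul_of_nonneg_left hdiff (sq_nonneg _)).trans_eq ?_)
    simp only [gridPt]
    push_cast
    field_simp
    ring
  have h1 := energy_Dh_le hN he ρ v
  have hA : 0 ≤ M ^ 2 * energy N q := by positivity
  have hB : 0 ≤ M ^ 2 * R ^ 2 * energy N q := by positivity
  have hD : 0 ≤ M ^ 2 * R ^ 4 * energy N q := by positivity
  interval_cases k
  · change energy N v ≤ _
    nlinarith
  · change energy N (Dh N ρ v) ≤ _
    nlinarith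
  · change energy N (Dh N ρ (Dh N ρ v)) ≤ _
    nlinarith

/-- Lemma 9.3: decomposition of `L_h` into a Hilbert-transform part
plus a smoothing remainder `K_{3h}`, with `K_{3h}(φ^p) = A_{-2}(φ)`. -/
theorem Lh_decomposition (f τ : ℝ → ℂ)
    (hfper : Function.Periodic f (2 * Real.pi)) (hτper : Function.Periodic τ (2 * Real.pi))
    (hf : ContDiff ℝ (⊤ : ℕ∞) f) (hτ : ContDiff ℝ (⊤ : ℕ∞) τ)
    (hτ' : ∀ α : ℝ, deriv τ α ≠ 0)
    (hinj : ∀ α β : ℝ, (¬ ∃ n : ℤ, α - β = n * (2 * Real.pi)) → τ α ≠ τ β)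
    (ρ : ℝ → ℝ) (hρ : IsFilter ρ) :
    (∀ N : ℤ, 2 ≤ N → Even N → ∀ q : ℤ → ℂ, ∀ i ∈ idxs N,
      Lh N f τ q i =
        -(f (gridPt N i) * deriv τ (gridPt N i) /
            (2 * (starRingEnd ℂ) (deriv τ (gridPt N i)) ^ 2)) * Hh N q i +
        K3h N f τ q i) ∧
    ∃ c : ℝ, 0 < c ∧ ∀ N : ℤ, 2 ≤ N → Even N → ∀ φ : ℤ → ℂ, ∀ k : ℕ, k ≤ 2 →
      l2norm N ((Dh N ρ)^[k] (K3h N f τ (filterP N ρ φ))) ≤ c * l2norm N φ := by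
  obtain ⟨R, hR0, hR, hRsin⟩ := exists_filter_bound hρ
  obtain ⟨C, hC0, hC⟩ := exists_energy_K3h_le hfper hτper hf hτ hτ' hinj hRsin
  refine ⟨fun N _ _ q i _ => Lh_eq N f τ q i, C * R + 1, by positivity, fun N hN he φ k hk => ?_⟩
  refine l2norm_le_of_energy_le hN (by positivity) ?_
  have hφ := energy_nonneg N φ
  refine (hC N hN he _ k hk).trans
    ((mul_le_mul_of_nonneg_left (energy_filterP_le hN he hR φ) (sq_nonneg C)).trans ?_)
  rw [← mul_assoc, ← mul_pow]
  gcongr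
  linarith

end
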